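/- arXiv:1103.4254 — 2 statements merged into one kernel-verified Lean document; each statement's English description precedes it below -/
import Mathlib

section
/- Let 𝒜 and ℬ be abelian categories, F : 𝒜 ⥤ ℬ a right exact functor (preserving finite colimits), G : 𝒜 ⥤ ℬ a left exact functor (preserving finite limits), and T : F ⟶ G a natural transformation. Then the category C(F,G,T) — whose objects are quadruples (A, B, u, v) with A an object of 𝒜, B an object of ℬ, u : F(A) → B and v : B → G(A) morphisms of ℬ satisfying v ∘ u = T_A, and whose morphisms (A,B,u,v) → (A',B',u',v') are pairs (a : A → A', b : B → B') with b ∘ u = u' ∘ F(a) and G(a) ∘ v = v' ∘ b — is an abelian category. -/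
open CategoryTheory CategoryTheory.Limits

universe v₁ v₂ u₁ u₂

variable {𝒜 : Type u₁} {ℬ : Type u₂} [Category.{v₁} 𝒜] [Category.{v₂} ℬ]
variable [Abelian 𝒜] [Abelian ℬ]

/-- Objects of the MacPherson–Vilonen category `C(F,G,T)`: quadruples `(A, B, u, v)`
with `v ∘ u = T_A`. -/
structure CFGT (F G : 𝒜 ⥤ ℬ) (T : F ⟶ G) where
  A : 𝒜
  B : ℬ
  u : F.obj A ⟶ B
  v : B ⟶ G.obj A
  comm : u ≫ v = T.app A

/-- Morphisms of `C(F,G,T)`: pairs `(a, b)` making the two evident squares commute. -/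
@[ext]
structure CFGTHom {F G : 𝒜 ⥤ ℬ} {T : F ⟶ G} (X Y : CFGT F G T) where
  a : X.A ⟶ Y.A
  b : X.B ⟶ Y.B
  comm_u : X.u ≫ b = F.map a ≫ Y.u
  comm_v : X.v ≫ G.map a = b ≫ Y.v

instance (F G : 𝒜 ⥤ ℬ) (T : F ⟶ G) : Category (CFGT F G T) where
  Hom X Y := CFGTHom X Y
  id X := ⟨𝟙 X.A, 𝟙 X.B, by simp, by simp⟩
  comp f g := ⟨f.a ≫ g.a, f.b ≫ g.b,
    by rw [← Category.assoc, f.comm_u, Category.assoc, g.comm_u, Functor.map_comp,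
      Category.assoc],
    by rw [Functor.map_comp, ← Category.assoc, f.comm_v, Category.assoc, g.comm_v,
      ← Category.assoc]⟩

namespace CFGT

set_option linter.unusedSectionVars false
set_option linter.unusedVariables false

open ZeroObject

section Basic

variable {F G : 𝒜 ⥤ ℬ} {T : F ⟶ G}

/-- Build a morphism. -/
def mkHom {X Y : CFGT F G T} (a : X.A ⟶ Y.A) (b : X.B ⟶ Y.B)
    (hu : X.u ≫ b = F.map a ≫ Y.u) (hv : X.v ≫ G.map a = b ≫ Y.v) : X ⟶ Y :=
  CFGTHom.mk a b hu hv

/-- First component. -/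
def fa {X Y : CFGT F G T} (f : X ⟶ Y) : X.A ⟶ Y.A := CFGTHom.a f

/-- Second component. -/
def fb {X Y : CFGT F G T} (f : X ⟶ Y) : X.B ⟶ Y.B := CFGTHom.b f

theorem wu {X Y : CFGT F G T} (f : X ⟶ Y) : X.u ≫ fb f = F.map (fa f) ≫ Y.u :=
  CFGTHom.comm_u f

theorem wv {X Y : CFGT F G T} (f : X ⟶ Y) : X.v ≫ G.map (fa f) = fb f ≫ Y.v :=
  CFGTHom.comm_v f

theorem hom_ext' {X Y : CFGT F G T} {f g : X ⟶ Y} (h₁ : fa f = fa g) (h₂ : fb f = fb g) :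
    f = g := CFGTHom.ext h₁ h₂

@[simp] theorem fa_mkHom {X Y : CFGT F G T} (a : X.A ⟶ Y.A) (b : X.B ⟶ Y.B) (hu hv) :
    fa (mkHom a b hu hv) = a := rfl

@[simp] theorem fb_mkHom {X Y : CFGT F G T} (a : X.A ⟶ Y.A) (b : X.B ⟶ Y.B) (hu hv) :
    fb (mkHom a b hu hv) = b := rfl

@[simp] theorem fa_id (X : CFGT F G T) : fa (𝟙 X) = 𝟙 X.A := rfl

@[simp] theorem fb_id (X : CFGT F G T) : fb (𝟙 X) = 𝟙 X.B := rfl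

@[simp] theorem fa_comp {X Y Z : CFGT F G T} (f : X ⟶ Y) (g : Y ⟶ Z) :
    fa (f ≫ g) = fa f ≫ fa g := rfl

@[simp] theorem fb_comp {X Y Z : CFGT F G T} (f : X ⟶ Y) (g : Y ⟶ Z) :
    fb (f ≫ g) = fb f ≫ fb g := rfl

end Basic

section Preadd

variable {F G : 𝒜 ⥤ ℬ} {T : F ⟶ G} [F.Additive] [G.Additive]

instance homAdd (X Y : CFGT F G T) : Add (X ⟶ Y) :=
  ⟨fun f g => mkHom (fa f + fa g) (fb f + fb g)
    (by simp [wu, F.map_add]) (by simp [wv, G.map_add])⟩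

instance homZero (X Y : CFGT F G T) : Zero (X ⟶ Y) :=
  ⟨mkHom 0 0 (by simp) (by simp)⟩

instance homNeg (X Y : CFGT F G T) : Neg (X ⟶ Y) :=
  ⟨fun f => mkHom (-fa f) (-fb f) (by simp [wu]) (by simp [wv])⟩

instance homAddCommGroup (X Y : CFGT F G T) : AddCommGroup (X ⟶ Y) where
  nsmul := nsmulRec
  zsmul := zsmulRec
  add_assoc f g h := hom_ext' (add_assoc _ _ _) (add_assoc _ _ _)
  zero_add f := hom_ext' (zero_add _) (zero_add _)
  add_zero f := hom_ext' (add_zero _) (add_zero _)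
  neg_add_cancel f := hom_ext' (neg_add_cancel _) (neg_add_cancel _)
  add_comm f g := hom_ext' (add_comm _ _) (add_comm _ _)

@[simp] theorem fa_add {X Y : CFGT F G T} (f g : X ⟶ Y) : fa (f + g) = fa f + fa g := rfl

@[simp] theorem fb_add {X Y : CFGT F G T} (f g : X ⟶ Y) : fb (f + g) = fb f + fb g := rfl

instance preadd : Preadditive (CFGT F G T) where
  homGroup X Y := homAddCommGroup X Y
  add_comp X Y Z f f' g := hom_ext' (Preadditive.add_comp _ _ _ _ _ _)
    (Preadditive.add_comp _ _ _ _ _ _)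
  comp_add X Y Z f g g' := hom_ext' (Preadditive.comp_add _ _ _ _ _ _)
    (Preadditive.comp_add _ _ _ _ _ _)

@[simp] theorem fa_zero (X Y : CFGT F G T) : fa (0 : X ⟶ Y) = 0 := rfl

@[simp] theorem fb_zero (X Y : CFGT F G T) : fb (0 : X ⟶ Y) = 0 := rfl

/-- The zero object. -/
noncomputable def zeroObj (F G : 𝒜 ⥤ ℬ) (T : F ⟶ G) [F.Additive] : CFGT F G T where
  A := 0
  B := 0
  u := 0
  v := 0
  comm := by
    have h : IsZero (F.obj (0 : 𝒜)) := F.map_isZero (isZero_zero _)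
    exact h.eq_of_src _ _

theorem hasTerminal : HasTerminal (CFGT F G T) := by
  have : HasZeroObject (CFGT F G T) := by
    refine ⟨zeroObj F G T, ?_⟩
    rw [IsZero.iff_id_eq_zero]
    exact hom_ext' ((isZero_zero 𝒜).eq_of_src _ _) ((isZero_zero ℬ).eq_of_src _ _)
  infer_instance

/-- The biproduct object. -/
noncomputable def sumObj (X Y : CFGT F G T) : CFGT F G T where
  A := X.A ⊞ Y.A
  B := X.B ⊞ Y.B
  u := F.map biprod.fst ≫ X.u ≫ biprod.inl + F.map biprod.snd ≫ Y.u ≫ biprod.inr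
  v := biprod.fst ≫ X.v ≫ G.map biprod.inl + biprod.snd ≫ Y.v ≫ G.map biprod.inr
  comm := by
    have h : T.app (X.A ⊞ Y.A) =
        T.app (X.A ⊞ Y.A) ≫ G.map (biprod.fst ≫ biprod.inl + biprod.snd ≫ biprod.inr) := by
      rw [biprod.total]; simp
    rw [h, G.map_add]
    have hx := X.comm
    have hy := Y.comm
    simp [Preadditive.add_comp, Preadditive.comp_add, reassoc_of% hx, reassoc_of% hy]

/-- The biproduct bicone. -/
noncomputable def sumBicone (X Y : CFGT F G T) : BinaryBicone X Y where
  pt := sumObj X Y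
  fst := mkHom biprod.fst biprod.fst (by simp [sumObj])
    (by simp [sumObj, ← G.map_comp])
  snd := mkHom biprod.snd biprod.snd (by simp [sumObj])
    (by simp [sumObj, ← G.map_comp])
  inl := mkHom biprod.inl biprod.inl (by simp [sumObj, ← F.map_comp_assoc])
    (by simp [sumObj])
  inr := mkHom biprod.inr biprod.inr (by simp [sumObj, ← F.map_comp_assoc])
    (by simp [sumObj])
  inl_fst := hom_ext' biprod.inl_fst biprod.inl_fst
  inl_snd := hom_ext' biprod.inl_snd biprod.inl_snd
  inr_fst := hom_ext' biprod.inr_fst biprod.inr_fst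
  inr_snd := hom_ext' biprod.inr_snd biprod.inr_snd

theorem hasFiniteProducts : HasFiniteProducts (CFGT F G T) := by
  have : HasBinaryBiproducts (CFGT F G T) := ⟨fun X Y =>
    hasBinaryBiproduct_of_total (sumBicone X Y) (hom_ext' biprod.total biprod.total)⟩
  have := hasTerminal (F := F) (G := G) (T := T)
  exact hasFiniteProducts_of_has_binary_and_terminal

end Preadd

section Ker

variable {F G : 𝒜 ⥤ ℬ} {T : F ⟶ G} [F.Additive] [G.Additive] [PreservesFiniteLimits G]

/-- A componentwise kernel is a kernel. -/
noncomputable def isKernel {Z X Y : CFGT F G T} (i : Z ⟶ X) (f : X ⟶ Y) (w : i ≫ f = 0)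
    (wa : fa i ≫ fa f = 0) (wb : fb i ≫ fb f = 0)
    (ha : IsLimit (KernelFork.ofι (fa i) wa)) (hb : IsLimit (KernelFork.ofι (fb i) wb)) :
    IsLimit (KernelFork.ofι i w) := by
  have ma : Mono (fa i) := mono_of_isLimit_fork ha
  have mb : Mono (fb i) := mono_of_isLimit_fork hb
  have mi : Mono i := ⟨fun g h e => hom_ext'
    ((cancel_mono (fa i)).1 (congrArg fa e)) ((cancel_mono (fb i)).1 (congrArg fb e))⟩
  refine KernelFork.IsLimit.ofι' i w (fun {W} k hk => ?_)
  obtain ⟨la, hla⟩ := KernelFork.IsLimit.lift' ha (fa k) (congrArg fa hk)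
  obtain ⟨lb, hlb⟩ := KernelFork.IsLimit.lift' hb (fb k) (congrArg fb hk)
  replace hla : la ≫ fa i = fa k := hla
  replace hlb : lb ≫ fb i = fb k := hlb
  refine ⟨mkHom la lb ?_ ?_, hom_ext' hla hlb⟩
  · rw [← cancel_mono (fb i), Category.assoc, Category.assoc, hlb, wu, wu, ← hla, F.map_comp,
      Category.assoc]
  · rw [← cancel_mono (G.map (fa i)), Category.assoc, Category.assoc, ← G.map_comp, hla, wv, wv,
      ← hlb, Category.assoc]

/-- The kernel object. -/
noncomputable def kerObj {X Y : CFGT F G T} (f : X ⟶ Y) : CFGT F G T where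
  A := kernel (fa f)
  B := kernel (fb f)
  u := kernel.lift _ (F.map (kernel.ι (fa f)) ≫ X.u) (by
    rw [Category.assoc, wu, ← F.map_comp_assoc, kernel.condition]; simp)
  v := kernel.lift (G.map (fa f)) (kernel.ι (fb f) ≫ X.v) (by
    rw [Category.assoc, wv, kernel.condition_assoc, zero_comp]) ≫
      (PreservesKernel.iso G (fa f)).inv
  comm := by
    rw [← cancel_mono (G.map (kernel.ι (fa f)))]
    simp [X.comm]

/-- The kernel inclusion. -/
noncomputable def kerι {X Y : CFGT F G T} (f : X ⟶ Y) : kerObj f ⟶ X :=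
  mkHom (kernel.ι _) (kernel.ι _) (by simp [kerObj]) (by simp [kerObj])

theorem kerι_comp {X Y : CFGT F G T} (f : X ⟶ Y) : kerι f ≫ f = 0 :=
  hom_ext' (kernel.condition _) (kernel.condition _)

/-- The kernel inclusion is a kernel. -/
noncomputable def kerIsLimit {X Y : CFGT F G T} (f : X ⟶ Y) :
    IsLimit (KernelFork.ofι (kerι f) (kerι_comp f)) :=
  isKernel _ _ _ (kernel.condition _) (kernel.condition _)
    (kernelIsKernel (fa f)) (kernelIsKernel (fb f))

theorem hasKernels : HasKernels (CFGT F G T) :=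
  ⟨fun f => ⟨⟨_, kerIsLimit f⟩⟩⟩

theorem mono_comp {X Y : CFGT F G T} (f : X ⟶ Y) [Mono f] : Mono (fa f) ∧ Mono (fb f) := by
  have h : kerι f = 0 := by rw [← cancel_mono f, kerι_comp, zero_comp]
  exact ⟨Preadditive.mono_of_kernel_zero (congrArg fa h),
    Preadditive.mono_of_kernel_zero (congrArg fb h)⟩

end Ker

section Coker

variable {F G : 𝒜 ⥤ ℬ} {T : F ⟶ G} [F.Additive] [G.Additive] [PreservesFiniteColimits F]

/-- A componentwise cokernel is a cokernel. -/
noncomputable def isCokernel {X Y Z : CFGT F G T} (f : X ⟶ Y) (p : Y ⟶ Z) (w : f ≫ p = 0)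
    (wa : fa f ≫ fa p = 0) (wb : fb f ≫ fb p = 0)
    (ha : IsColimit (CokernelCofork.ofπ (fa p) wa))
    (hb : IsColimit (CokernelCofork.ofπ (fb p) wb)) :
    IsColimit (CokernelCofork.ofπ p w) := by
  have ma : Epi (fa p) := epi_of_isColimit_cofork ha
  have mb : Epi (fb p) := epi_of_isColimit_cofork hb
  have mp : Epi p := ⟨fun g h e => hom_ext'
    ((cancel_epi (fa p)).1 (congrArg fa e)) ((cancel_epi (fb p)).1 (congrArg fb e))⟩
  refine CokernelCofork.IsColimit.ofπ' p w (fun {W} k hk => ?_)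
  obtain ⟨la, hla⟩ := CokernelCofork.IsColimit.desc' ha (fa k) (congrArg fa hk)
  obtain ⟨lb, hlb⟩ := CokernelCofork.IsColimit.desc' hb (fb k) (congrArg fb hk)
  replace hla : fa p ≫ la = fa k := hla
  replace hlb : fb p ≫ lb = fb k := hlb
  refine ⟨mkHom la lb ?_ ?_, hom_ext' hla hlb⟩
  · rw [← cancel_epi (F.map (fa p)), ← Category.assoc, ← Category.assoc, ← wu, Category.assoc, hlb,
      ← F.map_comp, hla, wu]
  · rw [← cancel_epi (fb p), ← Category.assoc, ← Category.assoc, hlb, ← wv, ← wv, Category.assoc,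
      ← G.map_comp, hla]

/-- The cokernel object. -/
noncomputable def cokerObj {X Y : CFGT F G T} (f : X ⟶ Y) : CFGT F G T where
  A := cokernel (fa f)
  B := cokernel (fb f)
  u := (PreservesCokernel.iso F (fa f)).hom ≫
    cokernel.desc (F.map (fa f)) (Y.u ≫ cokernel.π (fb f)) (by
      rw [← Category.assoc, ← wu, Category.assoc, cokernel.condition, comp_zero])
  v := cokernel.desc _ (Y.v ≫ G.map (cokernel.π (fa f))) (by
    rw [← Category.assoc, ← wv, Category.assoc, ← G.map_comp, cokernel.condition]; simp)
  comm := by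
    rw [← cancel_epi (F.map (cokernel.π (fa f)))]
    have h := Y.comm
    simp [reassoc_of% h]

/-- The cokernel projection. -/
noncomputable def cokerπ {X Y : CFGT F G T} (f : X ⟶ Y) : Y ⟶ cokerObj f :=
  mkHom (cokernel.π _) (cokernel.π _) (by simp [cokerObj]) (by simp [cokerObj])

theorem comp_cokerπ {X Y : CFGT F G T} (f : X ⟶ Y) : f ≫ cokerπ f = 0 :=
  hom_ext' (cokernel.condition _) (cokernel.condition _)

/-- The cokernel projection is a cokernel. -/
noncomputable def cokerIsColimit {X Y : CFGT F G T} (f : X ⟶ Y) :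
    IsColimit (CokernelCofork.ofπ (cokerπ f) (comp_cokerπ f)) :=
  isCokernel _ _ _ (cokernel.condition _) (cokernel.condition _)
    (cokernelIsCokernel (fa f)) (cokernelIsCokernel (fb f))

theorem hasCokernels : HasCokernels (CFGT F G T) :=
  ⟨fun f => ⟨⟨_, cokerIsColimit f⟩⟩⟩

theorem epi_comp {X Y : CFGT F G T} (f : X ⟶ Y) [Epi f] : Epi (fa f) ∧ Epi (fb f) := by
  have h : cokerπ f = 0 := by rw [← cancel_epi f, comp_cokerπ, comp_zero]
  exact ⟨Preadditive.epi_of_cokernel_zero (congrArg fa h),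
    Preadditive.epi_of_cokernel_zero (congrArg fb h)⟩

end Coker

section Main

variable {F G : 𝒜 ⥤ ℬ} {T : F ⟶ G} [F.Additive] [G.Additive]
  [PreservesFiniteColimits F] [PreservesFiniteLimits G]

theorem normalMono : IsNormalMonoCategory (CFGT F G T) where
  normalMonoOfMono f _ := by
    obtain ⟨ma, mb⟩ := mono_comp f
    exact ⟨⟨_, cokerπ f, comp_cokerπ f, isKernel _ _ _ (cokernel.condition _)
      (cokernel.condition _)
      (Abelian.monoIsKernelOfCokernel _ (colimit.isColimit (parallelPair (fa f) 0)))
      (Abelian.monoIsKernelOfCokernel _ (colimit.isColimit (parallelPair (fb f) 0)))⟩⟩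

theorem normalEpi : IsNormalEpiCategory (CFGT F G T) where
  normalEpiOfEpi f _ := by
    obtain ⟨ma, mb⟩ := epi_comp f
    exact ⟨⟨_, kerι f, kerι_comp f, isCokernel _ _ _ (kernel.condition _)
      (kernel.condition _)
      (Abelian.epiIsCokernelOfKernel _ (limit.isLimit (parallelPair (fa f) 0)))
      (Abelian.epiIsCokernelOfKernel _ (limit.isLimit (parallelPair (fb f) 0)))⟩⟩

end Main

end CFGT

/-- If `F` is right exact and `G` is left exact, the MacPherson–Vilonen category
`C(F,G,T)` is abelian. -/
theorem CFGT_abelian (F G : 𝒜 ⥤ ℬ) (T : F ⟶ G)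
    [PreservesFiniteColimits F] [PreservesFiniteLimits G] :
    Nonempty (Abelian (CFGT F G T)) := by
  have hF : F.Additive := by
    have : F.PreservesZeroMorphisms := Functor.preservesZeroMorphisms_of_preserves_initial_object
    have := preservesBinaryBiproducts_of_preservesBinaryCoproducts F
    exact Functor.additive_of_preservesBinaryBiproducts F
  have hG : G.Additive := by
    have : G.PreservesZeroMorphisms := Functor.preservesZeroMorphisms_of_preserves_terminal_object
    exact Functor.additive_of_preserves_binary_products G
  have h₁ := CFGT.normalMono (F := F) (G := G) (T := T)
  have h₂ := CFGT.normalEpi (F := F) (G := G) (T := T)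
  have h₃ := CFGT.hasFiniteProducts (F := F) (G := G) (T := T)
  have h₄ := CFGT.hasKernels (F := F) (G := G) (T := T)
  have h₅ := CFGT.hasCokernels (F := F) (G := G) (T := T)
  exact ⟨{ CFGT.preadd, h₁, h₂ with }⟩
end

section
/- Let K be a pretriangulated category. Let A →^u B →^v C →^w A[1] and A' →^{u'} B' →^{v'} C' →^{w'} A'[1] be two distinguished triangles, and let β : B → B' and γ : C → C' be morphisms with γ ∘ v = v' ∘ β. If Hom_K(B, C'[-1]) = 0 and Hom_K(C, B') = 0, then there is exactly one morphism α : A → A' such that (α, β, γ) is a morphism of triangles (i.e. β ∘ u = u' ∘ α and α[1] ∘ w = w' ∘ γ). -/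
open CategoryTheory CategoryTheory.Limits CategoryTheory.Pretriangulated

universe v u

variable {K : Type u} [Category.{v} K] [HasZeroObject K] [HasShift K ℤ]
  [Preadditive K] [∀ n : ℤ, (CategoryTheory.shiftFunctor K n).Additive] [Pretriangulated K]

/-- Given two distinguished triangles and morphisms `β : B ⟶ B'`, `γ : C ⟶ C'` commuting
with the second maps, if `Hom(B, C'[-1]) = 0` and `Hom(C, B') = 0`, then there is exactly
one `α : A ⟶ A'` making `(α, β, γ)` a morphism of triangles. -/
theorem existsUnique_triangle_morphism_fst
    (T₁ T₂ : Triangle K) (hT₁ : T₁ ∈ distTriang K) (hT₂ : T₂ ∈ distTriang K)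
    (β : T₁.obj₂ ⟶ T₂.obj₂) (γ : T₁.obj₃ ⟶ T₂.obj₃)
    (hcomm : T₁.mor₂ ≫ γ = β ≫ T₂.mor₂)
    (h₁ : ∀ f : T₁.obj₂ ⟶ T₂.obj₃⟦(-1 : ℤ)⟧, f = 0)
    (h₂ : ∀ f : T₁.obj₃ ⟶ T₂.obj₂, f = 0) :
    ∃! α : T₁.obj₁ ⟶ T₂.obj₁,
      T₁.mor₁ ≫ β = α ≫ T₂.mor₁ ∧ T₁.mor₃ ≫ α⟦(1 : ℤ)⟧' = γ ≫ T₂.mor₃ := by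
  obtain ⟨α, hα₁, hα₂⟩ := complete_distinguished_triangle_morphism₁ T₁ T₂ hT₁ hT₂ β γ hcomm
  refine ⟨α, ⟨hα₁, hα₂⟩, ?_⟩
  rintro α' ⟨hα₁', hα₂'⟩
  have e₁ : (α' - α) ≫ T₂.mor₁ = 0 := by
    rw [Preadditive.sub_comp, ← hα₁, ← hα₁', sub_self]
  have e₂ : T₁.mor₃ ≫ (α' - α)⟦(1 : ℤ)⟧' = 0 := by
    rw [Functor.map_sub, Preadditive.comp_sub, hα₂, hα₂', sub_self]
  obtain ⟨g, hg⟩ : ∃ g : T₁.obj₂⟦(1 : ℤ)⟧ ⟶ T₂.obj₁⟦(1 : ℤ)⟧,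
      (α' - α)⟦(1 : ℤ)⟧' = (-T₁.mor₁⟦(1 : ℤ)⟧') ≫ g :=
    Triangle.yoneda_exact₃ T₁.rotate (rot_of_distTriang _ hT₁) _ e₂
  obtain ⟨k, hk⟩ := (shiftFunctor K (1 : ℤ)).map_surjective (-g)
  have e₃ : α' - α = T₁.mor₁ ≫ k := by
    apply (shiftFunctor K (1 : ℤ)).map_injective
    rw [Functor.map_comp, hk, hg, Preadditive.neg_comp, Preadditive.comp_neg]
  have e₄ : k ≫ T₂.mor₁ = 0 := by
    obtain ⟨h, hh⟩ := Triangle.yoneda_exact₂ T₁ hT₁ (k ≫ T₂.mor₁)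
      (by rw [← Category.assoc, ← e₃, e₁])
    rw [hh, h₂ h, comp_zero]
  have e₅ : k = 0 := by
    obtain ⟨m, hm⟩ := Triangle.coyoneda_exact₂ T₂.invRotate (inv_rot_of_distTriang _ hT₂) k e₄
    rw [hm, show m = 0 from h₁ m]
    exact zero_comp
  rw [← sub_eq_zero, e₃, e₅, comp_zero]
end
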